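/- Let R be a subset of a commutative ring, let k, l, m > 2, let a ∈ R^k be a λ-quiddity cycle, b ∈ R^l a λ′-quiddity cycle and c ∈ R^m a λ″-quiddity cycle, and let σ ∈ D_{l+m−2}. Then either a ⊕ (b ⊕ c)^σ ∼ (a ⊕ c^{τ₁})^{τ₂} ⊕ b for some τ₁ ∈ D_m and τ₂ ∈ D_{k+m−2}, or a ⊕ (b ⊕ c)^σ ∼ (a ⊕ b^{τ₁})^{τ₂} ⊕ c for some τ₁ ∈ D_l and τ₂ ∈ D_{k+l−2}. -/

import Mathlib

open Matrix

/-- The 2×2 matrix `[[x, -1], [1, 0]]` associated to an entry of a quiddity cycle. -/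
def qMat {R : Type*} [CommRing R] (x : R) : Matrix (Fin 2) (Fin 2) R := !![x, -1; 1, 0]

/-- `c` is a `lam`-quiddity cycle: the product `∏ [[cₜ,−1],[1,0]]` equals `lam • Id`. -/
def IsQC {R : Type*} [CommRing R] (lam : R) (c : List R) : Prop :=
  (c.map qMat).prod = lam • (1 : Matrix (Fin 2) (Fin 2) R)

/-- `a ⊕ b = (a₁+b_l, a₂, …, a_{k−1}, a_k+b₁, b₂, …, b_{l−1})`. -/
def oplus {R : Type*} [CommRing R] (a b : List R) : List R :=
  (a.head?.getD 0 + b.getLast?.getD 0) ::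
    ((a.drop 1).dropLast ++ (a.getLast?.getD 0 + b.head?.getD 0) :: (b.drop 1).dropLast)

/-- Dihedral equivalence: `a` is a cyclic rotation of `b` or of the reversal of `b`,
i.e. `a = b^σ` for some `σ` in the dihedral group acting on `n` points. -/
def DihEquiv {α : Type*} (a b : List α) : Prop :=
  ∃ i : ℕ, a = b.rotate i ∨ a = b.reverse.rotate i

/-- The action of a dihedral group element, encoded by a rotation amount and a reversal flag. -/
def applyDih {α : Type*} (p : ℕ × Bool) (c : List α) : List α :=
  if p.2 then c.reverse.rotate p.1 else c.rotate p.1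

lemma oplus_form {R : Type*} [CommRing R] (p q s t : R) (A D : List R) :
    oplus (p :: (A ++ [q])) (s :: (D ++ [t])) = (p + t) :: (A ++ (q + s) :: D) := by
  simp [oplus, List.getLast?_cons, List.getLast?_append]

lemma exists_form {α : Type*} (l : List α) (h : 2 < l.length) :
    ∃ x B y, l = x :: (B ++ [y]) := by
  rcases l with _ | ⟨x, l⟩
  · simp at h
  · rcases List.eq_nil_or_concat l with rfl | ⟨B, y, rfl⟩
    · simp at h
    · exact ⟨x, B, y, by simp⟩

lemma rot_swap {α : Type*} {l l' : List α} (u v : List α) (h : l = u ++ v) (h' : l' = v ++ u) :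
    l ~r l' := by
  subst h h'
  exact List.isRotated_append

/-- Edge of `b` case. -/
lemma core {R : Type*} [CommRing R] (p q x y z w : R) (A U V C : List R) :
    ∃ b' f, (x :: (U ++ V ++ [y])) ~r b' ∧ oplus (p :: (A ++ [q])) b' ~r f ∧
      (∃ s F t, f = s :: (F ++ [t])) ∧
      oplus (p :: (A ++ [q])) (V ++ [y + z] ++ C ++ [x + w] ++ U) ~r
        oplus f (z :: (C ++ [w])) := by
  refine ⟨V ++ [y] ++ x :: U, ?_⟩
  have hb : (x :: (U ++ V ++ [y])) ~r (V ++ [y] ++ x :: U) :=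
    rot_swap (x :: U) (V ++ [y]) (by simp) rfl
  rcases V with _ | ⟨s, V⟩ <;> rcases List.eq_nil_or_concat U with rfl | ⟨U, t, rfl⟩
  · have e1 := oplus_form p q y x A []
    have e2 := oplus_form p q (y + z) (x + w) A C
    have e3 := oplus_form (p + x) (q + y) z w A C
    refine ⟨(p + x) :: (A ++ [q + y]), hb, ?_, ⟨_, _, _, rfl⟩, ?_⟩
    · simp at e1 ⊢; rw [e1]
    · simp at e2 e3 ⊢; rw [e2, e3]; simp only [add_assoc]; exact List.IsRotated.refl _
  · have e1 := oplus_form p q y t A (x :: U)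
    have e2 := oplus_form p q (y + z) t A (C ++ (x + w) :: U)
    have e3 := oplus_form x (q + y) z w (U ++ (p + t) :: A) C
    refine ⟨x :: ((U ++ (p + t) :: A) ++ [q + y]), hb, ?_, ⟨_, _, _, rfl⟩, ?_⟩
    · simp at e1 ⊢; rw [e1]
      exact rot_swap ((p + t) :: (A ++ [q + y])) (x :: U) (by simp) (by simp)
    · simp at e2 e3 ⊢; rw [e2, e3]
      exact rot_swap ((p + t) :: (A ++ (q + y + z) :: C)) ((x + w) :: U)
        (by simp [add_assoc]) (by simp)
  · have e1 := oplus_form p q s x A (V ++ [y])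
    have e2 := oplus_form p q s (x + w) A (V ++ (y + z) :: C)
    have e3 := oplus_form (p + x) y z w (A ++ (q + s) :: V) C
    refine ⟨(p + x) :: ((A ++ (q + s) :: V) ++ [y]), hb, ?_, ⟨_, _, _, rfl⟩, ?_⟩
    · simp at e1 ⊢; rw [e1]
    · simp at e2 e3 ⊢; rw [e2, e3]; simp only [add_assoc]; exact List.IsRotated.refl _
  · have e1 := oplus_form p q s t A (V ++ y :: x :: U)
    have e2 := oplus_form p q s t A (V ++ (y + z) :: (C ++ (x + w) :: U))
    have e3 := oplus_form x y z w (U ++ (p + t) :: (A ++ (q + s) :: V)) C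
    refine ⟨x :: ((U ++ (p + t) :: (A ++ (q + s) :: V)) ++ [y]), hb, ?_, ⟨_, _, _, rfl⟩, ?_⟩
    · simp at e1 ⊢; rw [e1]
      exact rot_swap ((p + t) :: (A ++ (q + s) :: V ++ [y])) (x :: U) (by simp) (by simp)
    · simp at e2 e3 ⊢; rw [e2, e3]
      exact rot_swap ((p + t) :: (A ++ (q + s) :: V ++ (y + z) :: C)) ((x + w) :: U)
        (by simp) (by simp)

lemma rot_main {R : Type*} [CommRing R] (a b c e : List R) (ha : 2 < a.length)
    (hb : 2 < b.length) (hc : 2 < c.length) (he : oplus b c ~r e) :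
    (∃ c' f, c ~r c' ∧ oplus a c' ~r f ∧ (∃ s F t, f = s :: (F ++ [t])) ∧
      oplus a e ~r oplus f b) ∨
    (∃ b' f, b ~r b' ∧ oplus a b' ~r f ∧ (∃ s F t, f = s :: (F ++ [t])) ∧
      oplus a e ~r oplus f c) := by
  obtain ⟨p, A, q, rfl⟩ := exists_form a ha
  obtain ⟨x, B, y, rfl⟩ := exists_form b hb
  obtain ⟨z, C, w, rfl⟩ := exists_form c hc
  rw [oplus_form] at he
  obtain ⟨n, hn⟩ := he
  rw [List.rotate_eq_drop_append_take_mod] at hn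
  obtain ⟨u, v, huv, rfl⟩ : ∃ u v, u ++ v = (x + w) :: (B ++ (y + z) :: C) ∧ e = v ++ u :=
    ⟨_, _, List.take_append_drop _ _, hn.symm⟩
  rcases u with _ | ⟨u0, u⟩
  · left
    have := core p q z w x y A C [] B
    simp at huv
    subst huv
    simpa [add_comm] using this
  · simp at huv
    obtain ⟨rfl, huv⟩ := huv
    rcases List.append_eq_append_iff.1 huv with ⟨as, h1, h2⟩ | ⟨as, h1, h2⟩
    · right
      have := core p q x y z w A u as C
      subst h1 h2
      simpa using this
    · rcases as with _ | ⟨s, as⟩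
      · right
        have := core p q x y z w A B [] C
        simp at h1 h2
        subst h1 h2
        simpa using this
      · left
        simp at h2
        obtain ⟨rfl, h2⟩ := h2
        have := core p q z w x y A as v B
        subst h1 h2
        simpa [add_comm] using this

lemma oplus_reverse {R : Type*} [CommRing R] (f c : List R) 
    (hf : ∃ s F t, f = s :: (F ++ [t])) (hc : ∃ s F t, c = s :: (F ++ [t])) :
    (oplus f c).reverse ~r oplus f.reverse c.reverse := by
  obtain ⟨p, A, q, rfl⟩ := hf
  obtain ⟨x, B, y, rfl⟩ := hc
  have e := oplus_form q p y x A.reverse B.reverse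
  rw [oplus_form]
  simp at e ⊢
  rw [e]
  exact rot_swap B.reverse ((q + x) :: (A.reverse ++ [p + y])) (by simp) (by simp)

lemma finish_rev {R : Type*} [CommRing R] (a b c d : List R) (hc : 2 < c.length)
    (H : ∃ b' f, b.reverse ~r b' ∧ oplus a b' ~r f ∧ (∃ s F t, f = s :: (F ++ [t])) ∧
      d ~r oplus f c.reverse) :
    ∃ τ₁ τ₂ : ℕ × Bool, DihEquiv d (oplus (applyDih τ₂ (oplus a (applyDih τ₁ b))) c) := by
  obtain ⟨b', f, ⟨n, rfl⟩, h2, h3, h4⟩ := H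
  have h5 := h2.reverse
  have h6 : (oplus a (b.reverse.rotate n)).reverse ~r f.reverse := h5
  obtain ⟨m, hm⟩ := h6
  refine ⟨(n, true), (m, true), ?_⟩
  simp only [applyDih, if_true]
  rw [hm]
  have hc' := exists_form c.reverse (by simpa using hc)
  have h7 := (oplus_reverse f c.reverse h3 hc').reverse
  simp only [List.reverse_reverse] at h7
  obtain ⟨i, hi⟩ := (h4.trans h7).symm
  exact ⟨i, Or.inr hi.symm⟩

lemma finish_rot {R : Type*} [CommRing R] (a b c d : List R)
    (H : ∃ b' f, b ~r b' ∧ oplus a b' ~r f ∧ (∃ s F t, f = s :: (F ++ [t])) ∧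
      d ~r oplus f c) :
    ∃ τ₁ τ₂ : ℕ × Bool, DihEquiv d (oplus (applyDih τ₂ (oplus a (applyDih τ₁ b))) c) := by
  obtain ⟨b', f, ⟨n, rfl⟩, ⟨m, rfl⟩, h3, h4⟩ := H
  obtain ⟨i, hi⟩ := h4.symm
  exact ⟨(n, false), (m, false), i, Or.inl (by simpa [applyDih] using hi.symm)⟩

/-- For quiddity cycles `a`, `b`, `c` of lengths `k, l, m > 2` and any dihedral element `σ`,
either `a ⊕ (b ⊕ c)^σ ∼ (a ⊕ c^{τ₁})^{τ₂} ⊕ b` or `a ⊕ (b ⊕ c)^σ ∼ (a ⊕ b^{τ₁})^{τ₂} ⊕ c`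
for suitable dihedral elements `τ₁`, `τ₂`. -/
theorem stmt5 {R : Type*} [CommRing R] (lam lam' lam'' : R)
    (h : lam = 1 ∨ lam = -1) (h' : lam' = 1 ∨ lam' = -1) (h'' : lam'' = 1 ∨ lam'' = -1)
    (a b c : List R) (ha : 2 < a.length) (hb : 2 < b.length) (hc : 2 < c.length)
    (hqa : IsQC lam a) (hqb : IsQC lam' b) (hqc : IsQC lam'' c)
    (σ : ℕ × Bool) :
    (∃ τ₁ τ₂ : ℕ × Bool,
        DihEquiv (oplus a (applyDih σ (oplus b c)))
          (oplus (applyDih τ₂ (oplus a (applyDih τ₁ c))) b)) ∨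
    (∃ τ₁ τ₂ : ℕ × Bool,
        DihEquiv (oplus a (applyDih σ (oplus b c)))
          (oplus (applyDih τ₂ (oplus a (applyDih τ₁ b))) c)) := by
  obtain ⟨n, fl⟩ := σ
  cases fl
  · have he : oplus b c ~r applyDih (n, false) (oplus b c) := ⟨n, by simp [applyDih]⟩
    rcases rot_main a b c _ ha hb hc he with H | H
    · exact Or.inl (finish_rot _ _ _ _ H)
    · exact Or.inr (finish_rot _ _ _ _ H)
  · have he : (oplus b c).reverse ~r applyDih (n, true) (oplus b c) := ⟨n, by simp [applyDih]⟩
    have hr := (oplus_reverse b c (exists_form b hb) (exists_form c hc)).symm.trans he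
    rcases rot_main a b.reverse c.reverse _ ha (by simpa using hb) (by simpa using hc) hr with H | H
    · exact Or.inl (finish_rev _ _ _ _ hb H)
    · exact Or.inr (finish_rev _ _ _ _ hc H)
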